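/- arXiv:cond-mat/0209627 — 5 statements merged into one kernel-verified Lean document; each statement's English description precedes it below -/
import Mathlib

section
/- Let n ≥ 1 and let A, B ∈ M_n(ℂ) be Hermitian matrices. Then the function of a real variable x ↦ log(Re Tr exp(A + x • B)) is convex on ℝ. -/
lemma aux_wdw {n : ℕ} (W : Matrix (Fin n) (Fin n) ℂ) (d : Fin n → ℝ) (i : Fin n) :
    (W * Matrix.diagonal (fun j => (d j : ℂ)) * star W) i i
      = ((∑ j, Complex.normSq (W i j) * d j : ℝ) : ℂ) := by
  rw [Matrix.mul_apply]
  push_cast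
  refine Finset.sum_congr rfl fun j _ => ?_
  rw [Matrix.mul_diagonal, Matrix.star_apply, Complex.normSq_eq_conj_mul_self]
  simp only [RCLike.star_def]
  ring

lemma aux_row {n : ℕ} (W : Matrix (Fin n) (Fin n) ℂ) (h : W * star W = 1) (i : Fin n) :
    ∑ j, Complex.normSq (W i j) = 1 := by
  have := aux_wdw W (fun _ => 1) i
  simp only [Complex.ofReal_one, Matrix.diagonal_one, mul_one, h, Matrix.one_apply_eq] at this
  exact_mod_cast this.symm

lemma aux_col {n : ℕ} (W : Matrix (Fin n) (Fin n) ℂ) (h : star W * W = 1) (j : Fin n) :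
    ∑ i, Complex.normSq (W i j) = 1 := by
  have := aux_row (star W) (by simpa using h) j
  simpa [Matrix.star_apply, Complex.normSq_conj] using this

lemma aux_diag {n : ℕ} (X : Matrix (Fin n) (Fin n) ℂ) (hX : X.IsHermitian) :
    ∃ (V : Matrix (Fin n) (Fin n) ℂ) (d : Fin n → ℝ), V * star V = 1 ∧ star V * V = 1 ∧
      X = V * Matrix.diagonal (fun j => (d j : ℂ)) * star V ∧
      (Matrix.trace (NormedSpace.exp X)).re = ∑ j, Real.exp (d j) := by
  have h1 := Unitary.coe_mul_star_self hX.eigenvectorUnitary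
  have h2 := Unitary.coe_star_mul_self hX.eigenvectorUnitary
  have h3 := hX.spectral_theorem
  rw [Unitary.conjStarAlgAut_apply] at h3
  rw [Unitary.coe_star] at h1
  generalize hX.eigenvectorUnitary.1 = V at *
  generalize hX.eigenvalues = d at *
  have h3' : X = V * Matrix.diagonal (fun j => (d j : ℂ)) * star V := h3
  refine ⟨V, d, h1, h2, h3', ?_⟩
  have hu : IsUnit V := ⟨⟨V, star V, h1, h2⟩, rfl⟩
  have hinv : V⁻¹ = star V := Matrix.inv_eq_right_inv h1
  rw [h3', ← hinv, Matrix.exp_conj _ _ hu, hinv, Matrix.trace_mul_comm, ← mul_assoc, h2, one_mul,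
    Matrix.exp_diagonal, Matrix.trace_diagonal, Complex.re_sum]
  refine Finset.sum_congr rfl fun j _ => ?_
  rw [Pi.coe_exp, ← Complex.exp_eq_exp_ℂ, Complex.exp_ofReal_re]

lemma aux_peierls {n : ℕ} (X U : Matrix (Fin n) (Fin n) ℂ) (hX : X.IsHermitian)
    (h1 : U * star U = 1) (h2 : star U * U = 1) :
    ∑ i, Real.exp ((star U * X * U) i i).re ≤ (Matrix.trace (NormedSpace.exp X)).re := by
  obtain ⟨V, d, hv1, hv2, hd, ht⟩ := aux_diag X hX
  rw [ht]
  set W := star U * V with hW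
  have hw1 : W * star W = 1 := by
    rw [hW, star_mul, star_star, mul_assoc, ← mul_assoc V, hv1, one_mul, h2]
  have hw2 : star W * W = 1 := by
    rw [hW, star_mul, star_star, mul_assoc, ← mul_assoc U, h1, one_mul, hv2]
  have he : star U * X * U = W * Matrix.diagonal (fun j => (d j : ℂ)) * star W := by
    rw [hd, hW, star_mul, star_star]; simp only [mul_assoc]
  calc ∑ i, Real.exp ((star U * X * U) i i).re
      ≤ ∑ i, ∑ j, Complex.normSq (W i j) * Real.exp (d j) := by
        refine Finset.sum_le_sum fun i _ => ?_
        rw [he, aux_wdw, Complex.ofReal_re]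
        have := convexOn_exp.map_sum_le (t := Finset.univ) (w := fun j => Complex.normSq (W i j))
          (p := d) (fun j _ => Complex.normSq_nonneg _) (aux_row W hw1 i) (fun _ _ => Set.mem_univ _)
        simpa only [smul_eq_mul] using this
    _ = ∑ j, Real.exp (d j) := by
        rw [Finset.sum_comm]
        refine Finset.sum_congr rfl fun j _ => ?_
        rw [← Finset.sum_mul, aux_col W hw2, one_mul]

lemma aux_pos {n : ℕ} (hn : 1 ≤ n) (X : Matrix (Fin n) (Fin n) ℂ) (hX : X.IsHermitian) :
    0 < (Matrix.trace (NormedSpace.exp X)).re := by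
  obtain ⟨V, d, -, -, -, ht⟩ := aux_diag X hX
  rw [ht]
  exact Finset.sum_pos (fun _ _ => Real.exp_pos _) ⟨⟨0, hn⟩, Finset.mem_univ _⟩

lemma aux_main {n : ℕ} (hn : 1 ≤ n) (X Y : Matrix (Fin n) (Fin n) ℂ) (hX : X.IsHermitian)
    (hY : Y.IsHermitian) (a b : ℝ) (ha : 0 ≤ a) (hb : 0 ≤ b) (hab : a + b = 1)
    (hM : (a • X + b • Y).IsHermitian) :
    Real.log (Matrix.trace (NormedSpace.exp (a • X + b • Y))).re ≤
      a * Real.log (Matrix.trace (NormedSpace.exp X)).re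
        + b * Real.log (Matrix.trace (NormedSpace.exp Y)).re := by
  have pX := aux_pos hn X hX
  have pY := aux_pos hn Y hY
  rw [Real.log_le_iff_le_exp (aux_pos hn _ hM)]
  obtain ⟨U, d, h1, h2, hd, ht⟩ := aux_diag _ hM
  have qX := aux_peierls X U hX h1 h2
  have qY := aux_peierls Y U hY h1 h2
  rw [ht]
  set SX := (Matrix.trace (NormedSpace.exp X)).re
  set SY := (Matrix.trace (NormedSpace.exp Y)).re
  set x : Fin n → ℝ := fun i => ((star U * X * U) i i).re with hx
  set y : Fin n → ℝ := fun i => ((star U * Y * U) i i).re with hy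
  have hdi : ∀ i, d i = a * x i + b * y i := by
    intro i
    have e : star U * (a • X + b • Y) * U = Matrix.diagonal (fun j => (d j : ℂ)) := by
      rw [hd, mul_assoc, mul_assoc, h2, mul_one, ← mul_assoc, h2, one_mul]
    have e2 := congrArg Complex.re (congrFun (congrFun e i) i)
    rw [mul_add, add_mul, Matrix.diagonal_apply_eq, Complex.ofReal_re] at e2
    simp only [mul_smul_comm, smul_mul_assoc, Matrix.add_apply, Matrix.smul_apply,
      Complex.add_re, Complex.smul_re, smul_eq_mul] at e2
    exact e2.symm
  have key : ∀ i, Real.exp (d i) ≤ Real.exp (a * Real.log SX + b * Real.log SY) *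
      (a * (Real.exp (x i) / SX) + b * (Real.exp (y i) / SY)) := by
    intro i
    have := convexOn_exp.2 (Set.mem_univ (x i - Real.log SX)) (Set.mem_univ (y i - Real.log SY))
      ha hb hab
    simp only [smul_eq_mul, Real.exp_sub, Real.exp_log pX, Real.exp_log pY] at this
    refine le_trans (le_of_eq ?_) (mul_le_mul_of_nonneg_left this (Real.exp_pos _).le)
    rw [← Real.exp_add, hdi]
    congr 1
    ring
  calc ∑ j, Real.exp (d j) ≤ _ := Finset.sum_le_sum fun i _ => key i
    _ = Real.exp (a * Real.log SX + b * Real.log SY) *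
      (a * ((∑ i, Real.exp (x i)) / SX) + b * ((∑ i, Real.exp (y i)) / SY)) := by
        rw [← Finset.mul_sum, Finset.sum_add_distrib, ← Finset.mul_sum, ← Finset.mul_sum,
          Finset.sum_div, Finset.sum_div]
    _ ≤ Real.exp (a * Real.log SX + b * Real.log SY) * (a * 1 + b * 1) := by
        have u := (div_le_one pX).2 qX
        have v := (div_le_one pY).2 qY
        gcongr
    _ = _ := by rw [mul_one, mul_one, hab, mul_one]


open NormedSpace in
/-- For `n ≥ 1` and Hermitian matrices `A, B ∈ M_n(ℂ)`, the function
`x ↦ log (Re Tr exp (A + x • B))` is convex on all of `ℝ`. -/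
theorem log_trace_exp_convexOn (n : ℕ) (hn : 1 ≤ n)
    (A B : Matrix (Fin n) (Fin n) ℂ) (hA : A.IsHermitian) (hB : B.IsHermitian) :
    ConvexOn ℝ Set.univ
      (fun x : ℝ => Real.log (Matrix.trace (exp (A + x • B))).re) := by
  have hH : ∀ t : ℝ, (A + t • B).IsHermitian := fun t => by
    refine hA.add ?_
    unfold Matrix.IsHermitian
    rw [Matrix.conjTranspose_smul, hB.eq, star_trivial]
  refine ⟨convex_univ, fun x _ y _ a b ha hb hab => ?_⟩
  have e : A + (a • x + b • y) • B = a • (A + x • B) + b • (A + y • B) := by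
    have : A = (a + b) • A := by rw [hab, one_smul]
    conv_lhs => rw [this]
    simp only [smul_eq_mul]
    module
  have := aux_main hn (A + x • B) (A + y • B) (hH x) (hH y) a b ha hb hab (e ▸ hH _)
  rw [← e] at this
  exact this
end

section
/- Let A, B ∈ M_n(ℂ) be arbitrary square complex matrices. Then for every real x, the function x ↦ Tr exp(A + x • B) has derivative Tr(exp(A + x • B) · B) at x; that is, HasDerivAt (fun x : ℝ => (Matrix.exp (A + x • B)).trace) ((Matrix.exp (A + x • B) * B).trace) x. -/
open NormedSpace in
theorem aux_trace_exp {R : Type*} [NormedRing R] [NormedAlgebra ℝ R] [CompleteSpace R]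
    (T : R →L[ℝ] ℂ) (hT : ∀ a b, T (a * b) = T (b * a)) (A B : R) (x : ℝ) :
    HasDerivAt (fun x : ℝ => T (exp (A + x • B))) (T (exp (A + x • B) * B)) x := by
  have hS : ∀ M : R, HasSum (fun k : ℕ => ((k.factorial : ℝ)⁻¹) • M ^ k) (exp M) := fun M =>
    exp_series_hasSum_exp' (𝕂 := ℝ) M
  let C : ℝ := ‖A‖ + (|x| + 1) * ‖B‖
  let g : ℕ → ℝ → ℂ := fun k y => (k.factorial : ℝ)⁻¹ • T ((A + y • B) ^ k)
  let g' : ℕ → ℝ → ℂ := fun k y =>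
    (k.factorial : ℝ)⁻¹ • ((k : ℝ) • T ((A + y • B) ^ (k - 1) * B))
  let u : ℕ → ℝ := fun k => (k.factorial : ℝ)⁻¹ * (k * (‖T‖ * (C ^ (k - 1) * ‖B‖)))
  have hfac : ∀ k : ℕ, (((k+1).factorial : ℝ))⁻¹ * ((k + 1 : ℕ) : ℝ) = (k.factorial : ℝ)⁻¹ := by
    intro k
    have h1 : ((k : ℝ) + 1) ≠ 0 := by exact_mod_cast Nat.succ_ne_zero k
    have h2 : (k.factorial : ℝ) ≠ 0 := by exact_mod_cast Nat.factorial_ne_zero k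
    rw [Nat.factorial_succ]; push_cast; field_simp
  have hC : 0 ≤ C := by positivity
  have hu : Summable u := by
    rw [← summable_nat_add_iff 1]
    have := (Real.summable_pow_div_factorial C).mul_left (‖T‖ * ‖B‖)
    refine this.congr fun k => ?_
    simp only [u, Nat.add_sub_cancel]
    rw [← mul_assoc, hfac]; ring
  have hg : ∀ k y, y ∈ Metric.ball x 1 → HasDerivAt (g k) (g' k y) y := by
    intro k y _
    have h0 : HasDerivAt (fun y : ℝ => A + y • B) B y := by
      have := ((hasDerivAt_id y).smul_const B).const_add A
      rw [one_smul] at this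
      exact this
    have h1 := (T.hasFDerivAt.comp_hasDerivAt y (h0.fun_pow' k)).const_smul
      ((k.factorial : ℝ)⁻¹)
    refine h1.congr_deriv ?_
    simp only [g', map_sum]
    congr 1
    rw [Finset.sum_congr rfl (g := fun _ => T ((A + y • B) ^ (k - 1) * B))]
    · simp
    · intro i hi
      have := Finset.mem_range.1 hi
      rw [hT, ← mul_assoc, ← pow_add]
      congr 3
      simp only [Nat.pred_eq_sub_one]
      omega
  have hb : ∀ k y, y ∈ Metric.ball x 1 → ‖g' k y‖ ≤ u k := by
    intro k y hy
    have hM : ‖A + y • B‖ ≤ C := by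
      refine (norm_add_le _ _).trans ?_
      rw [norm_smul]
      have : ‖y‖ ≤ |x| + 1 := by
        rw [Metric.mem_ball, Real.dist_eq] at hy
        have := abs_sub_abs_le_abs_sub y x
        rw [Real.norm_eq_abs]; linarith
      simp only [C]; gcongr
    have hp : ∀ j : ℕ, ‖(A + y • B) ^ j * B‖ ≤ C ^ j * ‖B‖ := by
      intro j
      induction j with
      | zero => simp
      | succ j ih =>
        rw [pow_succ', mul_assoc, pow_succ', mul_assoc]
        exact (norm_mul_le _ _).trans (mul_le_mul hM ih (norm_nonneg _) hC)
    simp only [g', u, norm_smul, norm_inv, RCLike.norm_natCast]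
    gcongr
    exact (T.le_opNorm _).trans (by gcongr; exact hp _)
  have hgs : ∀ y, HasSum (fun k => g k y) (T (exp (A + y • B))) := by
    intro y
    simpa only [map_smul] using T.hasSum (hS (A + y • B))
  have key := hasDerivAt_tsum_of_isPreconnected hu Metric.isOpen_ball
    (convex_ball x 1).isPreconnected hg hb (Metric.mem_ball_self one_pos) (hgs x).summable
    (Metric.mem_ball_self one_pos)
  have e1 : (fun z => ∑' k, g k z) = fun y : ℝ => T (exp (A + y • B)) :=
    funext fun y => (hgs y).tsum_eq
  have e2 : HasSum (fun k => g' k x) (T (exp (A + x • B) * B)) := by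
    rw [← hasSum_nat_add_iff' 1]
    have := T.hasSum ((hS (A + x • B)).mul_right B)
    simp only [Finset.sum_range_one]
    have z : g' 0 x = 0 := by simp [g']
    rw [z, sub_zero]
    convert! this using 1
    funext k
    simp only [g', Nat.add_sub_cancel, smul_mul_assoc, map_smul]
    rw [smul_smul, hfac]
  rw [e1, e2.tsum_eq] at key
  exact key

open NormedSpace in
/-- For arbitrary `A, B ∈ M_n(ℂ)` and every real `x`, the function
`x ↦ Tr exp (A + x • B)` has derivative `Tr (exp (A + x • B) * B)` at `x`. -/
theorem hasDerivAt_trace_exp {n : ℕ} (A B : Matrix (Fin n) (Fin n) ℂ) (x : ℝ) :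
    HasDerivAt (fun x : ℝ => Matrix.trace (exp (A + x • B)))
      (Matrix.trace (exp (A + x • B) * B)) x := by
  letI : NormedRing (Matrix (Fin n) (Fin n) ℂ) := Matrix.linftyOpNormedRing
  letI : NormedAlgebra ℝ (Matrix (Fin n) (Fin n) ℂ) := Matrix.linftyOpNormedAlgebra
  let T : Matrix (Fin n) (Fin n) ℂ →L[ℝ] ℂ :=
    ⟨Matrix.traceLinearMap (Fin n) ℝ ℂ, continuous_id.matrix_trace⟩
  exact aux_trace_exp T (fun a b => Matrix.trace_mul_comm a b) A B x
end

section
/- Let H, P ∈ M_n(ℂ) be arbitrary square complex matrices, β, t real. Define Ṗ := i • (H·P − P·H), Ṗ(t) := exp((i t) • H) · Ṗ · exp(−(i t) • H), and Ṗ(−iλ) := exp(λ • H) · Ṗ · exp(−λ • H) for real λ (with i = Complex.I and real scalars coerced to ℂ). Then i · Tr( exp(−β • H) · ( Ṗ(t)·P − P·Ṗ(t) ) ) = ∫_{λ=0}^{β} Tr( exp(−β • H) · Ṗ(−iλ) · Ṗ(t) ) dλ. -/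
theorem kms_aux_deriv {A : Type*} [NormedRing A] [NormedAlgebra ℂ A] [CompleteSpace A]
    (H P : A) (l : ℝ) :
    HasDerivAt (fun l : ℝ => NormedSpace.exp ((l : ℂ) • H) * P * NormedSpace.exp ((-(l : ℂ)) • H))
      (NormedSpace.exp ((l : ℂ) • H) * (H * P - P * H) * NormedSpace.exp ((-(l : ℂ)) • H)) l := by
  have h1 := hasDerivAt_exp_smul_const (𝕂 := ℂ) H (l : ℂ)
  have h2 := (hasDerivAt_exp_smul_const' (𝕂 := ℂ) H (-(l : ℂ))).scomp (l : ℂ) (hasDerivAt_neg (l : ℂ))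
  have h3 := ((h1.mul_const P).mul h2).scomp l Complex.ofRealCLM.hasDerivAt
  refine h3.congr_deriv ?_
  simp only [Complex.ofRealCLM_apply, Complex.ofReal_one, one_smul, neg_smul, mul_neg, Function.comp]
  noncomm_ring

attribute [local instance] Matrix.linftyOpNormedRing Matrix.linftyOpNormedAlgebra in
theorem kms_aux_trace {n : ℕ} (H P E Q : Matrix (Fin n) (Fin n) ℂ) (l : ℝ) :
    HasDerivAt (fun l : ℝ => Complex.I * Matrix.trace (E * (NormedSpace.exp ((l : ℂ) • H) * P *
        NormedSpace.exp ((-(l : ℂ)) • H)) * Q))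
      (Matrix.trace (E * (NormedSpace.exp ((l : ℂ) • H) * (Complex.I • (H * P - P * H)) *
        NormedSpace.exp ((-(l : ℂ)) • H)) * Q)) l := by
  have h := ((kms_aux_deriv H P l).const_mul E).mul_const Q
  have h2 := ((LinearMap.toContinuousLinearMap
    (Matrix.traceLinearMap (Fin n) ℝ ℂ)).hasFDerivAt.comp_hasDerivAt l h).const_mul Complex.I
  refine h2.congr_deriv ?_
  simp [mul_assoc]
  rfl

attribute [local instance] Matrix.linftyOpNormedRing Matrix.linftyOpNormedAlgebra in
theorem kms_aux_cont {n : ℕ} (H P E Q : Matrix (Fin n) (Fin n) ℂ) :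
    Continuous (fun l : ℝ => Matrix.trace (E * (NormedSpace.exp ((l : ℂ) • H) * P *
        NormedSpace.exp ((-(l : ℂ)) • H)) * Q)) := by
  have h : Continuous (fun l : ℝ => E * (NormedSpace.exp ((l : ℂ) • H) * P *
        NormedSpace.exp ((-(l : ℂ)) • H)) * Q) :=
    continuous_iff_continuousAt.2 fun l =>
      (((kms_aux_deriv H P l).const_mul E).mul_const Q).continuousAt
  exact h.matrix_trace


open NormedSpace Complex in
/-- The Kubo–Martin–Schwinger identity (Eq. (38) of the paper, `ħ = 1`): with
`Ṗ = i[H,P]`, `Ṗ(t) = e^{itH} Ṗ e^{-itH}` and `Ṗ(-iλ) = e^{λH} Ṗ e^{-λH}`,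
`i Tr(e^{-βH} [Ṗ(t), P]) = ∫_0^β Tr(e^{-βH} Ṗ(-iλ) Ṗ(t)) dλ`. -/
theorem trace_KMS_identity {n : ℕ} (H P : Matrix (Fin n) (Fin n) ℂ) (β t : ℝ) :
    let Pdot : Matrix (Fin n) (Fin n) ℂ := I • (H * P - P * H)
    let Pdot_t : Matrix (Fin n) (Fin n) ℂ :=
      exp ((I * t) • H) * Pdot * exp ((-(I * t)) • H)
    I * Matrix.trace (exp ((-(β : ℂ)) • H) * (Pdot_t * P - P * Pdot_t))
      = ∫ l in (0:ℝ)..β,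
          Matrix.trace (exp ((-(β : ℂ)) • H) *
            (exp ((l : ℂ) • H) * Pdot * exp ((-(l : ℂ)) • H)) * Pdot_t) := by

  intro Pdot Pdot_t
  rw [intervalIntegral.integral_eq_sub_of_hasDerivAt
    (fun l _ => kms_aux_trace H P (exp ((-(β : ℂ)) • H)) Pdot_t l)
    ((kms_aux_cont H Pdot _ Pdot_t).intervalIntegrable _ _)]
  have hE : exp ((-(β : ℂ)) • H) * exp ((β : ℂ) • H) = 1 := by
    rw [← Matrix.exp_add_of_commute _ _ (((Commute.refl H).smul_left _).smul_right _), ← add_smul]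
    simp
  have h1 : exp ((-(β : ℂ)) • H) * (exp ((β : ℂ) • H) * P * exp ((-(β : ℂ)) • H)) * Pdot_t
      = P * (exp ((-(β : ℂ)) • H) * Pdot_t) := by
    simp only [← mul_assoc]
    rw [hE, one_mul]
  rw [h1, Matrix.trace_mul_comm P]
  simp [mul_sub, mul_assoc, Matrix.trace_sub]
end

section
/- Let χ ∈ M_n(ℂ) be positive semidefinite and suppose the matrix 1 − (4π) • χ is positive definite (here 4π is the real number 4·Real.pi and 1 is the identity matrix). Then the matrix (1 − (4π) • χ)⁻¹ − 1 is positive semidefinite; equivalently, every eigenvalue ε_λ of the inverse dielectric relation ε = (1 − 4πχ)⁻¹ satisfies ε_λ ≥ 1. -/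
open scoped ComplexOrder in
/-- Matrix form of the generalized Landau–Lifshitz theorem: if the susceptibility `χ` is
positive semidefinite and `1 - 4π χ` is positive definite, then the dielectric operator
`ε = (1 - 4π χ)⁻¹` satisfies `ε ≥ 1`, i.e. `ε - 1` is positive semidefinite. -/
theorem dielectric_ge_one {n : ℕ} (χ : Matrix (Fin n) (Fin n) ℂ)
    (hχ : χ.PosSemidef) (hstab : ((1 : Matrix (Fin n) (Fin n) ℂ) - (4 * Real.pi) • χ).PosDef) :
    (((1 : Matrix (Fin n) (Fin n) ℂ) - (4 * Real.pi) • χ)⁻¹ - 1).PosSemidef := by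
  have hB : ((4 * Real.pi) • χ).PosSemidef := hχ.smul (by positivity)
  generalize (4 * Real.pi) • χ = B at hB hstab
  have hA : ((1 : Matrix (Fin n) (Fin n) ℂ) - B)⁻¹.PosSemidef := hstab.inv.posSemidef
  have hdet : IsUnit ((1 : Matrix (Fin n) (Fin n) ℂ) - B).det :=
    (Matrix.isUnit_iff_isUnit_det _).1 hstab.isUnit
  have h1 := Matrix.mul_nonsing_inv _ hdet
  have h2 := Matrix.nonsing_inv_mul _ hdet
  have h3 := hB.add (hA.conjTranspose_mul_mul_same B)
  rw [hB.isHermitian.eq] at h3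
  convert h3 using 1
  generalize ((1 : Matrix (Fin n) (Fin n) ℂ) - B)⁻¹ = E at h1 h2
  have e1 : B * E = E - 1 := by rw [← h1]; noncomm_ring
  have e2 : E * B = E - 1 := by rw [← h2]; noncomm_ring
  rw [e1, sub_mul, e2, one_mul]
  abel
end

section
/- Let ζ ∈ ℂ with 0 < ζ.im, and let f : ℝ → ℂ be differentiable with deriv f continuous, such that there is M with ‖f t‖ ≤ M and ‖deriv f t‖ ≤ M for all t ≥ 0. Then the functions t ↦ exp(i ζ t) · f t and t ↦ exp(i ζ t) · deriv f t are integrable on (0, ∞), and (−i ζ) · ∫_{t ∈ (0,∞)} exp(i ζ t) · f t dt = f 0 + ∫_{t ∈ (0,∞)} exp(i ζ t) · deriv f t dt, where i = Complex.I and exp is the complex exponential. -/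
open Complex MeasureTheory in
/-- Integration by parts for half-line Fourier–Laplace transforms (Eq. (35) of the paper):
for `Im ζ > 0` and a differentiable `f : ℝ → ℂ` with continuous derivative, both `f` and
`deriv f` bounded on `[0,∞)`, the functions `t ↦ e^{iζt} f t` and `t ↦ e^{iζt} f' t` are
integrable on `(0,∞)` and
`(-iζ) ∫_{(0,∞)} e^{iζt} f t dt = f 0 + ∫_{(0,∞)} e^{iζt} f' t dt`. -/
theorem laplace_transform_integration_by_parts (ζ : ℂ) (hζ : 0 < ζ.im)
    (f : ℝ → ℂ) (hf : Differentiable ℝ f) (hf' : Continuous (deriv f))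
    (M : ℝ) (hbound : ∀ t : ℝ, 0 ≤ t → ‖f t‖ ≤ M ∧ ‖deriv f t‖ ≤ M) :
    IntegrableOn (fun t : ℝ => Complex.exp (I * ζ * t) * f t) (Set.Ioi 0) ∧
    IntegrableOn (fun t : ℝ => Complex.exp (I * ζ * t) * deriv f t) (Set.Ioi 0) ∧
    (-(I * ζ)) * (∫ t in Set.Ioi (0:ℝ), Complex.exp (I * ζ * t) * f t)
      = f 0 + ∫ t in Set.Ioi (0:ℝ), Complex.exp (I * ζ * t) * deriv f t := by
  have ha : (I * ζ).re < 0 := by simpa using hζ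
  have hE := integrableOn_exp_mul_complex_Ioi ha 0
  have key : ∀ g : ℝ → ℂ, Continuous g → (∀ t : ℝ, 0 ≤ t → ‖g t‖ ≤ M) →
      IntegrableOn (fun t : ℝ => Complex.exp (I * ζ * t) * g t) (Set.Ioi 0) := by
    intro g hg hb
    refine Integrable.mul_bdd (c := M) hE hg.aestronglyMeasurable ?_
    filter_upwards [ae_restrict_mem measurableSet_Ioi] with t ht
    exact hb t (le_of_lt ht)
  have h1 := key f hf.continuous fun t ht => (hbound t ht).1
  have h2 := key (deriv f) hf' fun t ht => (hbound t ht).2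
  refine ⟨h1, h2, ?_⟩
  have hE0 : Filter.Tendsto (fun x : ℝ => Complex.exp (I * ζ * x)) Filter.atTop (nhds 0) := by
    rw [Complex.tendsto_exp_nhds_zero_iff]
    have := tendsto_const_nhds.neg_mul_atTop ha (Filter.tendsto_id (α := ℝ) (x := Filter.atTop))
    simpa using this
  have hlim : Filter.Tendsto (fun t : ℝ => Complex.exp (I * ζ * t) * f t)
      Filter.atTop (nhds 0) := by
    refine squeeze_zero_norm' (a := fun t : ℝ => ‖Complex.exp (I * ζ * t)‖ * M) ?_ ?_
    · filter_upwards [Filter.eventually_ge_atTop 0] with t ht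
      rw [norm_mul]
      exact mul_le_mul_of_nonneg_left (hbound t ht).1 (norm_nonneg _)
    · simpa using hE0.norm.mul_const M
  have hd : ∀ t ∈ Set.Ici (0:ℝ), HasDerivAt (fun t : ℝ => Complex.exp (I * ζ * t) * f t)
      ((I * ζ) * (Complex.exp (I * ζ * t) * f t) + Complex.exp (I * ζ * t) * deriv f t) t := by
    intro t _
    have h3 : HasDerivAt (fun t : ℝ => Complex.exp (I * ζ * t))
        (Complex.exp (I * ζ * t) * (I * ζ * 1)) t :=
      ((Complex.ofRealCLM.hasDerivAt (x := t)).const_mul (I * ζ)).cexp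
    refine (h3.mul (hf t).hasDerivAt).congr_deriv ?_
    ring
  have h4 := integral_Ioi_of_hasDerivAt_of_tendsto' hd ((h1.const_mul (I * ζ)).add h2) hlim
  rw [integral_add (h1.const_mul (I * ζ)) h2, integral_const_mul] at h4
  simp only [ofReal_zero, mul_zero, Complex.exp_zero, one_mul] at h4
  linear_combination -h4
end
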